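/- Inclusion of spaces: let (κ, k) ∈ L₁. Then C_{-1,(κ)}(0,∞) ⊆ C¹_{-1,(k)}(0,∞); that is, if f = κ * φ with φ ∈ C_{-1}(0,∞), then k * f is differentiable on (0,∞), has a finite limit at t = 0+, and d/dt (k * f) belongs to C_{-1}(0,∞). -/

import Mathlib

open Real Filter MeasureTheory intervalIntegral

/-- The Laplace convolution `(f * g)(t) = ∫_0^t f(t-τ) g(τ) dτ`. -/
noncomputable def lconv (f g : ℝ → ℝ) : ℝ → ℝ :=
  fun t => ∫ τ in (0:ℝ)..t, f (t - τ) * g τ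

/-- The space `C_{-1}(0,∞)`: functions representable as `t^p f₁(t)` with `p > -1`
and `f₁` continuous on `[0,∞)`. -/
def CMinusOne (f : ℝ → ℝ) : Prop :=
  ∃ p : ℝ, p > -1 ∧ ∃ f₁ : ℝ → ℝ, ContinuousOn f₁ (Set.Ici 0) ∧
    ∀ t > (0:ℝ), f t = t ^ p * f₁ t


/-- The class `L₁` of Sonin kernel pairs: `κ, k ∈ C_{-1}(0,∞)` with `(κ * k)(t) = 1`
for all `t > 0`. -/
def SoninPair (κ k : ℝ → ℝ) : Prop :=
  CMinusOne κ ∧ CMinusOne k ∧ ∀ t > (0:ℝ), lconv κ k t = 1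

/-!
On `C_{-1}(0,∞)` the Laplace convolution is associative, so for `f = κ * φ` the Sonin condition
gives `k * f = k * (κ * φ) = (k * κ) * φ = 1 * φ`: the function `k * f` is the primitive of `φ`
vanishing at `0`, and everything follows from the fundamental theorem of calculus.

That `C_{-1}(0,∞)` is closed under convolution is seen by rescaling: for `f(t) = t^p F(t)` and
`g(t) = t^q G(t)`, the substitution `τ = ts` turns `(f * g)(t)` into `t^(p+q+1)` times
`∫₀¹ (1-s)^p s^q F(t(1-s)) G(ts) ds`, whose beta weight is integrable since `p, q > -1`.
Associativity is inherited from the convolution on `ℝ` by extending all functions by zero.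
-/

theorem continuous_intervalIntegral_smul {X E : Type*} [TopologicalSpace X]
    [FirstCountableTopology X] [WeaklyLocallyCompactSpace X] [NormedAddCommGroup E]
    [NormedSpace ℝ E] {μ : Measure ℝ} {a b : ℝ} {w : ℝ → ℝ} {H : X → ℝ → E}
    (hw : IntervalIntegrable w μ a b) (hH : Continuous (Function.uncurry H)) :
    Continuous fun x => ∫ s in a..b, w s • H x s ∂μ := by
  refine continuous_iff_continuousAt.2 fun x₀ => ?_
  obtain ⟨K, hK, hKx₀⟩ := exists_compact_mem_nhds x₀
  obtain ⟨C, hC⟩ :=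
    (hK.prod (isCompact_uIcc (a := a) (b := b))).exists_bound_of_continuousOn hH.continuousOn
  refine continuousAt_of_dominated_interval (bound := fun s => ‖w s‖ * C) ?measurable ?bounded
    (hw.norm.mul_const C) ?continuous
  case measurable =>
    refine Eventually.of_forall fun x => (intervalIntegrable_iff.1 hw).aestronglyMeasurable.smul ?_
    exact (hH.uncurry_left x).aestronglyMeasurable
  case bounded =>
    filter_upwards [hKx₀] with x hx
    refine Eventually.of_forall fun s hs => ?_
    rw [norm_smul]
    gcongr
    exact hC (x, s) ⟨hx, Set.uIoc_subset_uIcc hs⟩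
  case continuous =>
    exact Eventually.of_forall fun s _ => ((hH.uncurry_right s).const_smul (w s)).continuousAt

theorem tendsto_intervalIntegral_nhdsGT {E : Type*} [NormedAddCommGroup E] [NormedSpace ℝ E]
    {μ : Measure ℝ} [NullSingletonClass μ] {f : ℝ → E} {a b : ℝ} (hab : a < b)
    (hf : IntervalIntegrable f μ a b) :
    Tendsto (fun t => ∫ x in a..t, f x ∂μ) (nhdsWithin a (Set.Ioi a)) (nhds 0) := by
  have hcont : ContinuousWithinAt (fun t => ∫ x in a..t, f x ∂μ) (Set.uIcc a b) a :=
    continuousOn_primitive_interval' hf Set.left_mem_uIcc a Set.left_mem_uIcc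
  rw [ContinuousWithinAt, integral_same, Set.uIcc_of_le hab.le] at hcont
  rw [← nhdsWithin_Ioc_eq_nhdsGT hab]
  exact hcont.mono_left (nhdsWithin_mono a Set.Ioc_subset_Icc_self)

theorem intervalIntegrable_one_sub_rpow_mul_rpow {p q : ℝ} (hp : -1 < p) (hq : -1 < q) :
    IntervalIntegrable (fun s : ℝ => (1 - s) ^ p * s ^ q) volume 0 1 := by
  have hbeta := (Complex.betaIntegral_convergent (u := (q + 1 : ℝ)) (v := (p + 1 : ℝ))
    (by rw [Complex.ofReal_re]; linarith) (by rw [Complex.ofReal_re]; linarith)).norm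
  refine hbeta.congr_uIoo fun s hs => ?_
  rw [Set.uIoo_of_le zero_le_one] at hs
  have hsub : 1 - (s : ℂ) = ((1 - s : ℝ) : ℂ) := by push_cast; rfl
  simp only [norm_mul]
  rw [hsub, Complex.norm_cpow_eq_rpow_re_of_pos hs.1,
    Complex.norm_cpow_eq_rpow_re_of_pos (sub_pos.2 hs.2)]
  simp [mul_comm]

namespace CMinusOne

variable {f g : ℝ → ℝ}

theorem exists_continuous (hf : CMinusOne f) :
    ∃ p > (-1 : ℝ), ∃ F : ℝ → ℝ, Continuous F ∧ ∀ t > 0, f t = t ^ p * F t := by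
  obtain ⟨p, hp, f₁, hf₁, hf⟩ := hf
  refine ⟨p, hp, fun t => f₁ (max t 0), ?_, fun t ht => ?_⟩
  · exact hf₁.comp_continuous (by fun_prop) fun t => le_max_right t 0
  · simpa only [max_eq_left ht.le] using hf t ht

theorem congr (hf : CMinusOne f) (hgf : Set.EqOn g f (Set.Ioi 0)) : CMinusOne g := by
  obtain ⟨p, hp, f₁, hf₁, hf⟩ := hf
  exact ⟨p, hp, f₁, hf₁, fun t ht => (hgf ht).trans (hf t ht)⟩

theorem norm (hf : CMinusOne f) : CMinusOne fun t => ‖f t‖ := by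
  obtain ⟨p, hp, f₁, hf₁, hf⟩ := hf
  refine ⟨p, hp, fun t => ‖f₁ t‖, hf₁.norm, fun t ht => ?_⟩
  simp only [hf t ht, norm_mul, Real.norm_of_nonneg (rpow_nonneg ht.le p)]

theorem continuousOn (hf : CMinusOne f) : ContinuousOn f (Set.Ioi 0) := by
  obtain ⟨p, -, F, hF, hf⟩ := hf.exists_continuous
  have hpow : ContinuousOn (fun t : ℝ => t ^ p) (Set.Ioi 0) :=
    continuousOn_id.rpow_const fun t ht => Or.inl (ne_of_gt ht)
  exact (hpow.mul hF.continuousOn).congr hf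

theorem intervalIntegrable (hf : CMinusOne f) {t : ℝ} (ht : 0 ≤ t) :
    IntervalIntegrable f volume 0 t := by
  obtain ⟨p, hp, F, hF, hf⟩ := hf.exists_continuous
  refine ((intervalIntegrable_rpow' hp).mul_continuousOn hF.continuousOn).congr fun s hs => ?_
  rw [Set.uIoc_of_le ht] at hs
  exact (hf s hs.1).symm

theorem hasDerivAt_integral (hf : CMinusOne f) {t : ℝ} (ht : 0 < t) :
    HasDerivAt (fun u => ∫ x in (0 : ℝ)..u, f x) (f t) t :=
  integral_hasDerivAt_right (hf.intervalIntegrable ht.le)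
    (hf.continuousOn.stronglyMeasurableAtFilter isOpen_Ioi t ht)
    (hf.continuousOn.continuousAt (Ioi_mem_nhds ht))

end CMinusOne

section Rescaling

variable {f g F G : ℝ → ℝ} {p q t : ℝ}

theorem lconv_integrand_rescale (hf : ∀ t > 0, f t = t ^ p * F t)
    (hg : ∀ t > 0, g t = t ^ q * G t) (ht : 0 < t) {s : ℝ} (hs : s ∈ Set.Ioo 0 1) :
    f (t - t * s) * g (t * s) =
      t ^ (p + q) * (((1 - s) ^ p * s ^ q) * (F (t * (1 - s)) * G (t * s))) := by
  have hs' : 0 < 1 - s := sub_pos.2 hs.2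
  rw [← mul_one_sub, hf _ (mul_pos ht hs'), hg _ (mul_pos ht hs.1), mul_rpow ht.le hs'.le,
    mul_rpow ht.le hs.1.le, rpow_add ht]
  ring

theorem lconv_eq_rpow_mul_integral (hf : ∀ t > 0, f t = t ^ p * F t)
    (hg : ∀ t > 0, g t = t ^ q * G t) (ht : 0 < t) :
    lconv f g t = t ^ (p + q + 1) *
      ∫ s in (0 : ℝ)..1, ((1 - s) ^ p * s ^ q) * (F (t * (1 - s)) * G (t * s)) :=
  calc lconv f g t
      = t * ∫ s in (0 : ℝ)..1, f (t - t * s) * g (t * s) := by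
        simpa only [lconv, mul_zero, mul_one, smul_eq_mul] using
          (smul_integral_comp_mul_left (a := 0) (b := 1) (fun τ => f (t - τ) * g τ) t).symm
    _ = t * ∫ s in (0 : ℝ)..1,
          t ^ (p + q) * (((1 - s) ^ p * s ^ q) * (F (t * (1 - s)) * G (t * s))) := by
        rw [integral_congr_Ioo_of_le zero_le_one fun s hs => lconv_integrand_rescale hf hg ht hs]
    _ = _ := by
        rw [intervalIntegral.integral_const_mul, rpow_add_one ht.ne']
        ring

theorem CMinusOne.intervalIntegrable_lconv_integrand (hf : CMinusOne f) (hg : CMinusOne g)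
    (ht : 0 < t) : IntervalIntegrable (fun τ => f (t - τ) * g τ) volume 0 t := by
  obtain ⟨p, hp, F, hF, hf⟩ := hf.exists_continuous
  obtain ⟨q, hq, G, hG, hg⟩ := hg.exists_continuous
  have hprofile : Continuous fun s => F (t * (1 - s)) * G (t * s) := by fun_prop
  rw [← IntervalIntegrable.comp_mul_left_iff ht.ne', zero_div, div_self ht.ne']
  refine (((intervalIntegrable_one_sub_rpow_mul_rpow hp hq).mul_continuousOn
    hprofile.continuousOn).const_mul (t ^ (p + q))).congr_uIoo fun s hs => ?_
  rw [Set.uIoo_of_le zero_le_one] at hs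
  exact (lconv_integrand_rescale hf hg ht hs).symm

theorem CMinusOne.lconv (hf : CMinusOne f) (hg : CMinusOne g) : CMinusOne (lconv f g) := by
  obtain ⟨p, hp, F, hF, hf⟩ := hf.exists_continuous
  obtain ⟨q, hq, G, hG, hg⟩ := hg.exists_continuous
  have hprofile : Continuous (Function.uncurry fun t s : ℝ => F (t * (1 - s)) * G (t * s)) := by
    unfold Function.uncurry
    fun_prop
  exact ⟨p + q + 1, by linarith, _,
    (continuous_intervalIntegral_smul (intervalIntegrable_one_sub_rpow_mul_rpow hp hq)
      hprofile).continuousOn,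
    fun t ht => lconv_eq_rpow_mul_integral hf hg ht⟩

end Rescaling

section Algebra

variable {f g h : ℝ → ℝ}

theorem lconv_comm (f g : ℝ → ℝ) : lconv f g = lconv g f := by
  ext t
  simpa only [lconv, sub_sub_cancel, sub_self, sub_zero, mul_comm] using
    (integral_comp_sub_left (a := 0) (b := t) (fun τ => f (t - τ) * g τ) t).symm

theorem lconv_congr {f₁ f₂ g₁ g₂ : ℝ → ℝ} (hf : Set.EqOn f₁ f₂ (Set.Ioi 0))
    (hg : Set.EqOn g₁ g₂ (Set.Ioi 0)) :
    Set.EqOn (lconv f₁ g₁) (lconv f₂ g₂) (Set.Ioi 0) := fun t ht =>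
  integral_congr_Ioo_of_le (Set.mem_Ioi.1 ht).le fun s hs => by
    rw [hf (sub_pos.2 hs.2), hg hs.1]

theorem lconv_one_left (f : ℝ → ℝ) (t : ℝ) :
    lconv (fun _ => 1) f t = ∫ τ in (0 : ℝ)..t, f τ := by
  simp only [lconv, one_mul]

theorem indicator_lconv_eq_convolution (f g : ℝ → ℝ) :
    (Set.Ioi 0).indicator (lconv f g) =
      convolution ((Set.Ioi 0).indicator f) ((Set.Ioi 0).indicator g)
        (ContinuousLinearMap.mul ℝ ℝ) volume := by
  rw [← posConvolution_eq_convolution_indicator _ _ _ volume, lconv_comm]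
  unfold lconv posConvolution
  simp only [ContinuousLinearMap.mul_apply', mul_comm]

theorem CMinusOne.aestronglyMeasurable_indicator (hf : CMinusOne f) :
    AEStronglyMeasurable ((Set.Ioi 0).indicator f) volume :=
  (aestronglyMeasurable_indicator_iff measurableSet_Ioi).2
    (hf.continuousOn.aestronglyMeasurable measurableSet_Ioi)

theorem CMinusOne.convolutionExistsAt_indicator (hf : CMinusOne f) (hg : CMinusOne g) (t : ℝ) :
    ConvolutionExistsAt ((Set.Ioi 0).indicator f) ((Set.Ioi 0).indicator g) t
      (ContinuousLinearMap.mul ℝ ℝ) volume := by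
  have hintegrand : (fun τ => (Set.Ioi 0).indicator f τ * (Set.Ioi 0).indicator g (t - τ)) =
      (Set.Ioo 0 t).indicator fun τ => g (t - τ) * f τ := by
    ext τ
    by_cases h₀ : 0 < τ <;> by_cases ht : τ < t <;> simp [h₀, ht, mul_comm]
  simp only [ConvolutionExistsAt, ContinuousLinearMap.mul_apply']
  rw [hintegrand, integrable_indicator_iff measurableSet_Ioo]
  rcases le_or_gt t 0 with ht | ht
  · rw [Set.Ioo_eq_empty_of_le ht]
    exact integrableOn_empty
  · exact (intervalIntegrable_iff_integrableOn_Ioo_of_le ht.le).1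
      (hg.intervalIntegrable_lconv_integrand hf ht)

theorem lconv_assoc (hf : CMinusOne f) (hg : CMinusOne g) (hh : CMinusOne h) :
    Set.EqOn (lconv (lconv f g) h) (lconv f (lconv g h)) (Set.Ioi 0) := by
  intro t ht
  have hnorm (u : ℝ → ℝ) : (fun x => ‖(Set.Ioi 0).indicator u x‖) =
      (Set.Ioi 0).indicator fun x => ‖u x‖ :=
    funext fun _ => norm_indicator_eq_indicator_norm u _
  have hassoc := convolution_assoc (ContinuousLinearMap.mul ℝ ℝ) (ContinuousLinearMap.mul ℝ ℝ)
    (ContinuousLinearMap.mul ℝ ℝ) (ContinuousLinearMap.mul ℝ ℝ) mul_assoc (x₀ := t)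
    hf.aestronglyMeasurable_indicator hg.aestronglyMeasurable_indicator
    hh.aestronglyMeasurable_indicator
    (Eventually.of_forall fun y => hf.convolutionExistsAt_indicator hg y)
    (Eventually.of_forall fun y => by
      simpa only [hnorm] using hg.norm.convolutionExistsAt_indicator hh.norm y)
    (by simpa only [hnorm, ← indicator_lconv_eq_convolution] using
      hf.norm.convolutionExistsAt_indicator (hg.norm.lconv hh.norm) t)
  simpa only [← indicator_lconv_eq_convolution, Set.indicator_of_mem ht] using hassoc

theorem SoninPair.lconv_lconv {κ k φ : ℝ → ℝ} (hκk : SoninPair κ k) (hφ : CMinusOne φ) {t : ℝ}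
    (ht : 0 < t) : lconv k (lconv κ φ) t = ∫ τ in (0 : ℝ)..t, φ τ := by
  obtain ⟨hκ, hk, hone⟩ := hκk
  calc lconv k (lconv κ φ) t
      = lconv (lconv k κ) φ t := (lconv_assoc hk hκ hφ ht).symm
    _ = lconv (lconv κ k) φ t := by rw [lconv_comm k κ]
    _ = lconv (fun _ => 1) φ t := lconv_congr hone (Set.eqOn_refl φ _) ht
    _ = ∫ τ in (0 : ℝ)..t, φ τ := lconv_one_left φ t

end Algebra

/-- Inclusion of spaces: for `(κ, k) ∈ L₁`, `C_{-1,(κ)}(0,∞) ⊆ C¹_{-1,(k)}(0,∞)`;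
i.e. if `f = κ * φ` with `φ ∈ C_{-1}(0,∞)`, then `f ∈ C_{-1}(0,∞)`, `k * f` is
differentiable on `(0,∞)`, has a finite limit at `0+`, and `d/dt (k * f)` belongs
to `C_{-1}(0,∞)`. -/
theorem CMinusOne_kappa_subset_C1_k (κ k f φ : ℝ → ℝ) (hκk : SoninPair κ k)
    (hφ : CMinusOne φ) (hfφ : ∀ t > (0:ℝ), f t = lconv κ φ t) :
    CMinusOne f ∧ (∀ t > (0:ℝ), DifferentiableAt ℝ (lconv k f) t) ∧
      (∃ c : ℝ, Tendsto (lconv k f) (nhdsWithin 0 (Set.Ioi 0)) (nhds c)) ∧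
      CMinusOne (deriv (lconv k f)) := by
  have hprimitive : Set.EqOn (lconv k f) (fun t => ∫ τ in (0 : ℝ)..t, φ τ) (Set.Ioi 0) :=
    fun t ht => (lconv_congr (Set.eqOn_refl k _) hfφ ht).trans (hκk.lconv_lconv hφ ht)
  have hderiv : ∀ t > (0 : ℝ), HasDerivAt (lconv k f) (φ t) t := fun t ht =>
    (hφ.hasDerivAt_integral ht).congr_of_eventuallyEq
      (hprimitive.eventuallyEq_of_mem (Ioi_mem_nhds ht))
  have hlimit : Tendsto (lconv k f) (nhdsWithin 0 (Set.Ioi 0)) (nhds 0) :=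
    (tendsto_intervalIntegral_nhdsGT one_pos (hφ.intervalIntegrable zero_le_one)).congr'
      (hprimitive.symm.eventuallyEq_of_mem self_mem_nhdsWithin)
  exact ⟨(hκk.1.lconv hφ).congr hfφ, fun t ht => (hderiv t ht).differentiableAt, ⟨0, hlimit⟩,
    hφ.congr fun t ht => (hderiv t ht).deriv⟩
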